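/- Suppose Θ = {θ_1, θ_2}, the edge cost functions ℓ̃_e^θ : ℝ² → ℝ are continuously differentiable, the tolls are type-independent (τ̃_e^{θ_1} = τ̃_e^{θ_2} = τ̃_e with τ̃_e : ℝ² → ℝ continuously differentiable), and for every edge e ∈ E and all (x, y) ∈ ℝ² (x the θ_1-edge flow, y the θ_2-edge flow): ∂_2 τ̃_e(x, y) − ∂_1 τ̃_e(x, y) = ∂_1 ℓ̃_e^{θ_2}(x, y) − ∂_2 ℓ̃_e^{θ_1}(x, y). Then the abstract game associated with the routing game with tolls admits the potential function V_τ(f) = Σ_{e∈E} [ ∫_0^{φ_e^{θ_1}(f)} (ℓ̃_e^{θ_1} + τ̃_e)(u_1, φ_e^{θ_2}(f)) du_1 + ∫_0^{φ_e^{θ_2}(f)} (ℓ̃_e^{θ_2} + τ̃_e)(φ_e^{θ_1}(f), u_2) du_2 − ∫_0^{φ_e^{θ_2}(f)} ∫_0^{φ_e^{θ_1}(f)} ∂_2 (ℓ̃_e^{θ_1} + τ̃_e)(u_1, u_2) du_1 du_2 ]. -/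

import Mathlib

/-!
The toll condition says exactly that the tolled costs `a = ℓ₁ + τ` and `b = ℓ₂ + τ` satisfy
`∂₂a = ∂₁b` on every edge. The double integral in `Vpot` can then be evaluated in two ways:
integrating `∂₁b` in the first variable turns it into `∫₀^Y b(X,·) - ∫₀^Y b(0,·)`
(`integral_partial_eq_snd`), while Fubini and integrating `∂₂a` in the second variable turn it
into `∫₀^X a(·,Y) - ∫₀^X a(·,0)` (`integral_partial_eq_fst`). Hence each edge term of `Vpot` is
the edge term of `U1` plus a quantity independent of player 1's flow, and likewise the edge term
of `U2` plus a quantity independent of player 2's flow.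
-/


open MeasureTheory

noncomputable section

namespace RoutingGame

open scoped Classical

variable {E P : Type*}

/-- Edge flow of one type on edge `e` induced by the path flows `g` of that type:
`φ_e = ∑_{p ∈ P : e ∈ p} g_p`. -/
def edgeFlow [Fintype P] (edges : P → Finset E) (g : P → ℝ) (e : E) : ℝ :=
  ∑ p ∈ Finset.univ.filter (fun p => e ∈ edges p), g p

/-- Utility of player 1 (type `θ₁`) in the abstract game:
`U₁(g,h) = ∑_e ∫_0^{φ_e^{θ₁}} ℓ̃_e^{θ₁}(u, φ_e^{θ₂}) du`. -/
def U1 [Fintype E] [Fintype P] (edges : P → Finset E) (ℓ1 : E → ℝ → ℝ → ℝ)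
    (g h : P → ℝ) : ℝ :=
  ∑ e : E, ∫ u in (0:ℝ)..(edgeFlow edges g e), ℓ1 e u (edgeFlow edges h e)

/-- Utility of player 2 (type `θ₂`) in the abstract game:
`U₂(g,h) = ∑_e ∫_0^{φ_e^{θ₂}} ℓ̃_e^{θ₂}(φ_e^{θ₁}, u) du`. -/
def U2 [Fintype E] [Fintype P] (edges : P → Finset E) (ℓ2 : E → ℝ → ℝ → ℝ)
    (g h : P → ℝ) : ℝ :=
  ∑ e : E, ∫ u in (0:ℝ)..(edgeFlow edges h e), ℓ2 e (edgeFlow edges g e) u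

/-- `V` is a potential function for the two-player abstract game associated with
edge cost functions `ℓ1, ℓ2` (arguments of `V`: path flows of type `θ₁`, of type `θ₂`). -/
def IsPotential [Fintype E] [Fintype P] (edges : P → Finset E)
    (ℓ1 ℓ2 : E → ℝ → ℝ → ℝ) (V : (P → ℝ) → (P → ℝ) → ℝ) : Prop :=
  (∀ g g' h : P → ℝ, V g h - V g' h = U1 edges ℓ1 g h - U1 edges ℓ1 g' h) ∧
  (∀ g h h' : P → ℝ, V g h - V g h' = U2 edges ℓ2 g h - U2 edges ℓ2 g h')

/-- The candidate potential function
`V(f) = ∑_e [∫_0^{φ₁} ℓ₁(u,φ₂) du + ∫_0^{φ₂} ℓ₂(φ₁,u) du − ∫_0^{φ₂}∫_0^{φ₁} ∂₂ℓ₁(u₁,u₂) du₁ du₂]`. -/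
def Vpot [Fintype E] [Fintype P] (edges : P → Finset E)
    (ℓ1 ℓ2 : E → ℝ → ℝ → ℝ) (g h : P → ℝ) : ℝ :=
  ∑ e : E,
    ((∫ u in (0:ℝ)..(edgeFlow edges g e), ℓ1 e u (edgeFlow edges h e)) +
     (∫ u in (0:ℝ)..(edgeFlow edges h e), ℓ2 e (edgeFlow edges g e) u) -
     ∫ u2 in (0:ℝ)..(edgeFlow edges h e),
       ∫ u1 in (0:ℝ)..(edgeFlow edges g e), deriv (fun t => ℓ1 e u1 t) u2)

section Calculus

variable {a b : ℝ → ℝ → ℝ}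

lemma hasDerivAt_fst (ha : ContDiff ℝ 1 (fun q : ℝ × ℝ => a q.1 q.2)) (x y : ℝ) :
    HasDerivAt (fun t => a t y) (fderiv ℝ (fun q : ℝ × ℝ => a q.1 q.2) (x, y) (1, 0)) x :=
  HasFDerivAt.comp_hasDerivAt (f := fun t => (t, y)) x
    (ha.differentiable one_ne_zero (x, y)).hasFDerivAt
    ((hasDerivAt_id x).prodMk (hasDerivAt_const x y))

lemma hasDerivAt_snd (ha : ContDiff ℝ 1 (fun q : ℝ × ℝ => a q.1 q.2)) (x y : ℝ) :
    HasDerivAt (fun t => a x t) (fderiv ℝ (fun q : ℝ × ℝ => a q.1 q.2) (x, y) (0, 1)) y :=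
  HasFDerivAt.comp_hasDerivAt (f := fun t => (x, t)) y
    (ha.differentiable one_ne_zero (x, y)).hasFDerivAt
    ((hasDerivAt_const y x).prodMk (hasDerivAt_id y))

lemma continuous_deriv_snd (ha : ContDiff ℝ 1 (fun q : ℝ × ℝ => a q.1 q.2)) :
    Continuous (fun q : ℝ × ℝ => deriv (fun t => a q.1 t) q.2) := by
  have h : (fun q : ℝ × ℝ => deriv (fun t => a q.1 t) q.2) =
      fun q => fderiv ℝ (fun q : ℝ × ℝ => a q.1 q.2) q (0, 1) :=
    funext fun q => (hasDerivAt_snd ha q.1 q.2).deriv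
  rw [h]
  exact (ha.continuous_fderiv one_ne_zero).clm_apply continuous_const

/-- Integrating `∂₂a` first in its own variable, after exchanging the order of integration. -/
lemma integral_partial_eq_fst (ha : ContDiff ℝ 1 (fun q : ℝ × ℝ => a q.1 q.2)) (X Y : ℝ) :
    (∫ u2 in (0:ℝ)..Y, ∫ u1 in (0:ℝ)..X, deriv (fun t => a u1 t) u2) =
      (∫ u in (0:ℝ)..X, a u Y) - ∫ u in (0:ℝ)..X, a u 0 := by
  have hc := continuous_deriv_snd ha
  have hslice : ∀ y, Continuous fun u => a u y := fun y =>
    ha.continuous.comp (continuous_id.prodMk continuous_const)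
  have hint : IntegrableOn (Function.uncurry fun u2 u1 => deriv (fun t => a u1 t) u2)
      (Set.uIoc 0 Y ×ˢ Set.uIoc 0 X) := by
    have hK : IsCompact (Set.uIcc (0:ℝ) Y ×ˢ Set.uIcc (0:ℝ) X) :=
      isCompact_uIcc.prod isCompact_uIcc
    exact ((hc.comp continuous_swap).continuousOn.integrableOn_compact hK).mono_set
      (Set.prod_mono Set.uIoc_subset_uIcc Set.uIoc_subset_uIcc)
  rw [intervalIntegral_intervalIntegral_swap hint,
    ← intervalIntegral.integral_sub ((hslice Y).intervalIntegrable _ _)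
      ((hslice 0).intervalIntegrable _ _)]
  refine intervalIntegral.integral_congr fun u _ => ?_
  exact intervalIntegral.integral_deriv_eq_sub
    (fun y _ => (hasDerivAt_snd ha u y).differentiableAt)
    ((hc.comp (continuous_const.prodMk continuous_id)).intervalIntegrable _ _)

/-- When `∂₂a = ∂₁b`, the inner integral is that of `∂₁b` in its own variable. -/
lemma integral_partial_eq_snd (ha : ContDiff ℝ 1 (fun q : ℝ × ℝ => a q.1 q.2))
    (hb : ContDiff ℝ 1 (fun q : ℝ × ℝ => b q.1 q.2))
    (hab : ∀ x y, deriv (fun t => a x t) y = deriv (fun t => b t y) x) (X Y : ℝ) :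
    (∫ u2 in (0:ℝ)..Y, ∫ u1 in (0:ℝ)..X, deriv (fun t => a u1 t) u2) =
      (∫ u in (0:ℝ)..Y, b X u) - ∫ u in (0:ℝ)..Y, b 0 u := by
  have hslice : ∀ x, Continuous fun u => b x u := fun x =>
    hb.continuous.comp (continuous_const.prodMk continuous_id)
  rw [← intervalIntegral.integral_sub ((hslice X).intervalIntegrable _ _)
      ((hslice 0).intervalIntegrable _ _)]
  refine intervalIntegral.integral_congr fun y _ => ?_
  refine intervalIntegral.integral_eq_sub_of_hasDerivAt (f := fun t => b t y) (fun x _ => ?_)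
    (((continuous_deriv_snd ha).comp
      (continuous_id.prodMk continuous_const)).intervalIntegrable _ _)
  simp only [hab]
  exact (hasDerivAt_fst hb x y).differentiableAt.hasDerivAt

end Calculus

/-- The potential property for any pair of `C¹` edge costs with `∂₂a = ∂₁b` on every edge. -/
lemma isPotential_Vpot {E P : Type*} [Fintype E] [Fintype P] (edges : P → Finset E)
    (a b : E → ℝ → ℝ → ℝ)
    (ha : ∀ e, ContDiff ℝ 1 (fun q : ℝ × ℝ => a e q.1 q.2))
    (hb : ∀ e, ContDiff ℝ 1 (fun q : ℝ × ℝ => b e q.1 q.2))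
    (hab : ∀ e x y, deriv (fun t => a e x t) y = deriv (fun t => b e t y) x) :
    IsPotential edges a b (Vpot edges a b) := by
  constructor
  · intro g g' h
    simp only [Vpot, U1, integral_partial_eq_snd (ha _) (hb _) (hab _), ← Finset.sum_sub_distrib]
    exact Finset.sum_congr rfl fun e _ => by ring
  · intro g h h'
    simp only [Vpot, U2, integral_partial_eq_fst (ha _), ← Finset.sum_sub_distrib]
    exact Finset.sum_congr rfl fun e _ => by ring

/-- **Proposition 2 (indistinguishable types).** With two types, continuously
differentiable edge cost functions `ℓ1, ℓ2` and a type-independent toll `τ`, if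
`∂₂τ̃_e − ∂₁τ̃_e = ∂₁ℓ̃_e^{θ₂} − ∂₂ℓ̃_e^{θ₁}` on every edge, then the abstract game of
the routing game with tolls (edge costs `ℓ + τ`) admits the corresponding potential
function `Vpot`. -/
theorem tolls_indistinguishable {E P : Type*} [Fintype E] [Fintype P]
    (edges : P → Finset E) (ℓ1 ℓ2 τ : E → ℝ → ℝ → ℝ)
    (hℓ1 : ∀ e, ContDiff ℝ 1 (fun q : ℝ × ℝ => ℓ1 e q.1 q.2))
    (hℓ2 : ∀ e, ContDiff ℝ 1 (fun q : ℝ × ℝ => ℓ2 e q.1 q.2))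
    (hτ : ∀ e, ContDiff ℝ 1 (fun q : ℝ × ℝ => τ e q.1 q.2))
    (hcond : ∀ (e : E) (x y : ℝ),
      deriv (fun t => τ e x t) y - deriv (fun t => τ e t y) x =
        deriv (fun t => ℓ2 e t y) x - deriv (fun t => ℓ1 e x t) y) :
    IsPotential edges
      (fun e x y => ℓ1 e x y + τ e x y) (fun e x y => ℓ2 e x y + τ e x y)
      (Vpot edges
        (fun e x y => ℓ1 e x y + τ e x y) (fun e x y => ℓ2 e x y + τ e x y)) := by
  refine isPotential_Vpot edges _ _ (fun e => (hℓ1 e).add (hτ e))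
    (fun e => (hℓ2 e).add (hτ e)) fun e x y => ?_
  have h1 := (hasDerivAt_snd (hℓ1 e) x y).differentiableAt
  have h2 := (hasDerivAt_fst (hℓ2 e) x y).differentiableAt
  have h3 := (hasDerivAt_snd (hτ e) x y).differentiableAt
  have h4 := (hasDerivAt_fst (hτ e) x y).differentiableAt
  rw [deriv_fun_add h1 h3, deriv_fun_add h2 h4]
  linarith [hcond e x y]

end RoutingGame
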